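/- Let G be a finite Frobenius group with Frobenius kernel K and Frobenius complement H. Then G has perfect order classes if, and only if, the following three conditions hold: (a) H has perfect order classes; (b) K is a homocyclic p-group for some odd prime p, i.e. K is isomorphic to a direct product of r copies of a cyclic group of order p^k for some positive integers k and r; and (c) the order of H equals p^r - 1, where r is the rank of K. -/

import Mathlib

/-- The number of elements of order `n` in the group `G`. -/
noncomputable def orderCount (G : Type*) [Group G] (n : ℕ) : ℕ :=
  Nat.card {g : G // orderOf g = n}

/-- A group has *perfect order classes* if, for every positive integer `n`, the number of
elements of order `n` is either zero or a divisor of the order of the group. -/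
def PerfectOrderClasses (G : Type*) [Group G] : Prop :=
  ∀ n : ℕ, 0 < n → orderCount G n = 0 ∨ orderCount G n ∣ Nat.card G

/-- `G` is a Frobenius group with Frobenius kernel `K` and Frobenius complement `H`:
`K` is a nontrivial proper normal subgroup, `H` a subgroup with `K ⊓ H = ⊥` and `KH = G`,
and the conjugation action of `H` on `K` is fixed-point-free. -/
def IsFrobeniusWith {G : Type*} [Group G] (K H : Subgroup G) : Prop :=
  K ≠ ⊥ ∧ K ≠ ⊤ ∧ K.Normal ∧ K ⊓ H = ⊥ ∧
    (∀ g : G, ∃ k ∈ K, ∃ h ∈ H, g = k * h) ∧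
    ∀ h ∈ H, h ≠ 1 → ∀ k ∈ K, k ≠ 1 → h * k * h⁻¹ ≠ k


section OrderCount

theorem orderCount_congr {A B : Type*} [Group A] [Group B] (e : A ≃* B) (n : ℕ) :
    orderCount A n = orderCount B n :=
  Nat.card_congr (e.toEquiv.subtypeEquiv fun a => by simp)

theorem orderCount_one (A : Type*) [Group A] : orderCount A 1 = 1 := by
  simp [orderCount, orderOf_eq_one_iff]

theorem orderCount_ne_zero_iff {A : Type*} [Group A] [Finite A] {n : ℕ} :
    orderCount A n ≠ 0 ↔ ∃ a : A, orderOf a = n := by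
  rw [orderCount, Nat.card_ne_zero]
  exact ⟨fun h => nonempty_subtype.mp h.1, fun h => ⟨nonempty_subtype.mpr h, inferInstance⟩⟩

/-- Inversion pairs off the elements of any order greater than two. -/
theorem even_orderCount {A : Type*} [Group A] [Finite A] {n : ℕ} (hn : 2 < n) :
    Even (orderCount A n) := by
  classical
  let X := {a : A // orderOf a = n}
  have : Fintype X := Fintype.ofFinite X
  let f : Function.End X := fun a => ⟨(a : A)⁻¹, by rw [orderOf_inv]; exact a.2⟩
  have hf : f ^ 2 ^ 1 = 1 := by
    funext a
    exact Subtype.ext (inv_inv (a : A))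
  have hfix : IsEmpty (Function.fixedPoints f) := by
    refine ⟨fun ⟨a, ha⟩ => ?_⟩
    have h1 : (a : A)⁻¹ = a := congrArg Subtype.val ha
    have h2 : (a : A) ^ 2 = 1 := by
      rw [sq]
      nth_rewrite 1 [← h1]
      exact inv_mul_cancel _
    have h3 := Nat.le_of_dvd two_pos (orderOf_dvd_of_pow_eq_one h2)
    have h4 := a.2
    omega
  have := Equiv.Perm.card_fixedPoints_modEq (p := 2) hf
  rw [Fintype.card_eq_zero_iff.mpr hfix] at this
  rw [orderCount, Nat.card_eq_fintype_card]
  exact even_iff_two_dvd.mpr (Nat.modEq_zero_iff_dvd.mp this)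

theorem PerfectOrderClasses.even_card {A : Type*} [Group A] [Finite A] [Nontrivial A]
    (hA : PerfectOrderClasses A) : Even (Nat.card A) := by
  obtain ⟨a, ha⟩ := exists_ne (1 : A)
  have h1 : orderOf a ≠ 1 := mt orderOf_eq_one_iff.mp ha
  have h0 := orderOf_pos a
  by_cases h2 : orderOf a = 2
  · exact even_iff_two_dvd.mpr (h2 ▸ orderOf_dvd_natCard a)
  · have hdvd := (hA _ h0).resolve_left (orderCount_ne_zero_iff.mpr ⟨a, rfl⟩)
    exact (even_orderCount (A := A) (n := orderOf a) (by omega)).trans_dvd hdvd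

theorem orderCount_mul_of_coprime {A : Type*} [CommGroup A] {m n : ℕ} (hm : 0 < m) (hn : 0 < n)
    (hmn : m.Coprime n) : orderCount A (m * n) = orderCount A m * orderCount A n := by
  obtain ⟨e, hem, hen⟩ := Nat.chineseRemainder hmn 1 0
  obtain ⟨f, hfm, hfn⟩ := Nat.chineseRemainder hmn 0 1
  have pow_eq {a : A} {d u v : ℕ} (ha : orderOf a = d) (h : u ≡ v [MOD d]) : a ^ u = a ^ v :=
    pow_eq_pow_iff_modEq.mpr (ha ▸ h)
  have gcd_eq {s t u : ℕ} (hs : u ≡ 1 [MOD s]) (ht : u ≡ 0 [MOD t]) : (s * t).gcd u = t := by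
    have hsu : Nat.Coprime u s := by simpa [Nat.Coprime] using hs.gcd_eq
    rw [Nat.gcd_comm, hsu.symm.gcd_mul_left_cancel_right]
    exact Nat.gcd_eq_right (Nat.modEq_zero_iff_dvd.mp ht)
  rw [orderCount, orderCount, orderCount, ← Nat.card_prod]
  refine (Nat.card_congr (Equiv.ofBijective
    (fun x : {a : A // orderOf a = m} × {a : A // orderOf a = n} =>
      (⟨x.1 * x.2, by
        rw [(Commute.all _ _).orderOf_mul_eq_mul_orderOf_of_coprime
          (by rw [x.1.2, x.2.2]; exact hmn), x.1.2, x.2.2]⟩ : {a : A // orderOf a = m * n}))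
    ⟨?_, ?_⟩)).symm
  · have left (x : {a : A // orderOf a = m}) (y : {a : A // orderOf a = n}) :
        ((x : A) * y) ^ e = x := by
      rw [mul_pow, pow_eq x.2 hem, pow_eq y.2 hen, pow_one, pow_zero, mul_one]
    rintro ⟨x, y⟩ ⟨x', y'⟩ h
    have h' : (x : A) * y = x' * y' := congrArg Subtype.val h
    have hx : (x : A) = x' := by rw [← left x y, h', left]
    have hy : (y : A) = y' := by rwa [hx, mul_right_inj] at h'
    exact Prod.ext (Subtype.ext hx) (Subtype.ext hy)
  · rintro ⟨z, hz⟩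
    have hfin : IsOfFinOrder z := orderOf_pos_iff.mp (hz ▸ Nat.mul_pos hm hn)
    refine ⟨⟨⟨z ^ e, ?_⟩, ⟨z ^ f, ?_⟩⟩, Subtype.ext ?_⟩
    · rw [hfin.orderOf_pow, hz, gcd_eq hem hen, Nat.mul_div_cancel _ hn]
    · rw [hfin.orderOf_pow, hz, mul_comm, gcd_eq hfn hfm, Nat.mul_div_cancel _ hm]
    · change z ^ e * z ^ f = z
      rw [← pow_add]
      conv_rhs => rw [← pow_one z]
      exact pow_eq hz ((Nat.modEq_and_modEq_iff_modEq_mul hmn).mp ⟨hem.add hfm, hen.add hfn⟩)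

theorem card_ker_pow_add_orderCount {A : Type*} [CommGroup A] [Finite A] {p : ℕ} (hp : p.Prime)
    (j : ℕ) :
    Nat.card (powMonoidHom (p ^ j) : A →* A).ker + orderCount A (p ^ (j + 1)) =
      Nat.card (powMonoidHom (p ^ (j + 1)) : A →* A).ker := by
  classical
  have : Fact p.Prime := ⟨hp⟩
  rw [orderCount]
  have h1 : Nat.card (powMonoidHom (p ^ j) : A →* A).ker = Nat.card {a : A // a ^ p ^ j = 1} := rfl
  have h2 : Nat.card (powMonoidHom (p ^ (j + 1)) : A →* A).ker =
      Nat.card {a : A // a ^ p ^ (j + 1) = 1} := rfl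
  rw [h1, h2, ← Nat.card_sum, ← Nat.card_congr (subtypeOrEquiv _ _ ?_)]
  · refine Nat.card_congr (Equiv.subtypeEquivRight fun a => ⟨?_, fun h => ?_⟩)
    · rintro (h | h)
      · rw [pow_succ, pow_mul, h, one_pow]
      · rw [← h, pow_orderOf_eq_one]
    · by_cases h' : a ^ p ^ j = 1
      · exact Or.inl h'
      · exact Or.inr (orderOf_eq_prime_pow h' h)
  · rw [disjoint_iff_inf_le]
    rintro a ⟨h, h'⟩
    rw [← orderOf_dvd_iff_pow_eq_one, h', Nat.pow_dvd_pow_iff_le_right hp.one_lt] at h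
    omega

theorem card_ker_pow_pi_zmod {ι : Type*} [Fintype ι] (n : ι → ℕ) [∀ i, NeZero (n i)] (m : ℕ) :
    Nat.card (powMonoidHom m : (∀ i, Multiplicative (ZMod (n i))) →* _).ker =
      ∏ i, (n i).gcd m := by
  have h (i : ι) :
      (n i).gcd m = Nat.card (powMonoidHom m : Multiplicative (ZMod (n i)) →* _).ker := by
    rw [IsCyclic.card_powMonoidHom_ker]
    simp
  rw [Finset.prod_congr rfl fun i _ => h i, ← Nat.card_pi]
  refine Nat.card_congr ((Equiv.subtypeEquivRight fun f => ?_).trans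
    (Equiv.subtypePiEquivPi
      (p := fun i x => x ∈ (powMonoidHom m : Multiplicative (ZMod (n i)) →* _).ker)))
  simp [MonoidHom.mem_ker, funext_iff]

theorem card_ker_pow_congr {A B : Type*} [CommGroup A] [CommGroup B] (e : A ≃* B) (m : ℕ) :
    Nat.card (powMonoidHom m : A →* A).ker = Nat.card (powMonoidHom m : B →* B).ker :=
  Nat.card_congr (e.toEquiv.subtypeEquiv fun a => by simp [MonoidHom.mem_ker, ← map_pow])

end OrderCount

section HomocyclicRecognition

theorem Nat.Prime.pow_sub_eq_of_pow_eq_pow_add {p h a c s : ℕ} (hp : p.Prime) (hh : 0 < h)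
    (hcop : p.Coprime h) (heq : p ^ a = p ^ c + h * p ^ s) : c ≤ a ∧ p ^ (a - c) = h + 1 := by
  have hpos : 0 < h * p ^ s := Nat.mul_pos hh (pow_pos hp.pos _)
  have hca : c < a := (Nat.pow_lt_pow_iff_right hp.one_lt).mp (by omega)
  obtain ⟨d, rfl⟩ := Nat.exists_eq_add_of_lt hca
  have hsc : s = c := by
    rcases lt_trichotomy s c with hs | hs | hs
    · obtain ⟨t, rfl⟩ := Nat.exists_eq_add_of_lt hs
      exfalso
      have h1 : p ^ s * (p ^ (t + 1) * p ^ (d + 1)) = p ^ s * (p ^ (t + 1) + h) := by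
        calc _ = p ^ (s + t + 1 + d + 1) := by ring
          _ = _ := heq
          _ = _ := by ring
      have h2 := Nat.eq_of_mul_eq_mul_left (pow_pos hp.pos s) h1
      have h3 : p ∣ p ^ (t + 1) := dvd_pow_self p t.succ_ne_zero
      exact hp.coprime_iff_not_dvd.mp hcop
        ((Nat.dvd_add_right h3).mp (h2 ▸ h3.mul_right _))
    · exact hs
    · obtain ⟨t, rfl⟩ := Nat.exists_eq_add_of_lt hs
      exfalso
      have h1 : p ^ c * p ^ (d + 1) = p ^ c * (1 + h * p ^ (t + 1)) := by
        calc _ = p ^ (c + d + 1) := by ring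
          _ = _ := heq
          _ = _ := by ring
      have h2 := Nat.eq_of_mul_eq_mul_left (pow_pos hp.pos c) h1
      have h3 : p ∣ h * p ^ (t + 1) := (dvd_pow_self p t.succ_ne_zero).mul_left h
      exact hp.one_lt.ne' (Nat.dvd_one.mp
        ((Nat.dvd_add_left h3).mp (h2 ▸ dvd_pow_self p d.succ_ne_zero)))
  subst hsc
  refine ⟨hca.le, Nat.eq_of_mul_eq_mul_left (pow_pos hp.pos s) ?_⟩
  rw [← pow_add, Nat.add_sub_cancel' hca.le, heq]
  ring

/-- A finite abelian `p`-group of exponent `p ^ k` whose order is `p ^ (r * k)`, where `p ^ r` is the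
number of solutions of `a ^ p = 1`, is homocyclic of rank `r`. -/
theorem nonempty_mulEquiv_pi_zmod_of_card {A : Type*} [CommGroup A] [Finite A] {p k r : ℕ}
    (hp : p.Prime) (hexp : Monoid.exponent A = p ^ k)
    (hker : Nat.card (powMonoidHom p : A →* A).ker = p ^ r) (hcard : Nat.card A = p ^ (r * k)) :
    Nonempty (A ≃* (Fin r → Multiplicative (ZMod (p ^ k)))) := by
  classical
  obtain ⟨ι, _, n, hn, ⟨e⟩⟩ := CommGroup.equiv_prod_multiplicative_zmod_of_finite A
  have (i : ι) : NeZero (n i) := ⟨by have := hn i; omega⟩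
  have hdvd (i : ι) : n i ∣ p ^ k := by
    have h : orderOf (Pi.mulSingle i (Multiplicative.ofAdd (1 : ZMod (n i))) :
        ∀ i, Multiplicative (ZMod (n i))) = n i := by
      rw [orderOf_piMulSingle, orderOf_ofAdd_eq_addOrderOf, ZMod.addOrderOf_one]
    rw [← h, ← hexp, Monoid.exponent_eq_of_mulEquiv e]
    exact Monoid.order_dvd_exponent _
  choose m hm hnm using fun i => (Nat.dvd_prime_pow hp).mp (hdvd i)
  have hgcd (i : ι) : (n i).gcd p = p := by
    refine Nat.gcd_eq_right ?_
    rw [hnm]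
    refine dvd_pow_self p fun h0 => ?_
    have := hn i
    rw [hnm, h0, pow_zero] at this
    exact this.false
  have hr : Fintype.card ι = r := by
    rw [card_ker_pow_congr e, card_ker_pow_pi_zmod, Finset.prod_congr rfl fun i _ => hgcd i,
      Finset.prod_const, Finset.card_univ] at hker
    exact Nat.pow_right_injective hp.two_le hker
  have hsum : ∑ i, m i = ∑ _i : ι, k := by
    rw [Finset.sum_const, Finset.card_univ, hr, smul_eq_mul]
    refine Nat.pow_right_injective hp.two_le ?_
    change p ^ (∑ i, m i) = p ^ (r * k)
    rw [← hcard, Nat.card_congr e.toEquiv, Nat.card_pi, ← Finset.prod_pow_eq_pow_sum]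
    exact Finset.prod_congr rfl fun i _ => by rw [← hnm]; simp
  have hmk : ∀ i, m i = k := fun i =>
    (Finset.sum_eq_sum_iff_of_le fun i _ => hm i).mp hsum i (Finset.mem_univ i)
  obtain rfl : n = fun _ => p ^ k := funext fun i => by rw [hnm, hmk]
  exact ⟨e.trans (MulEquiv.arrowCongr (Fintype.equivFinOfCardEq hr)
    (MulEquiv.refl _))⟩

/-- A finite abelian group all of whose order classes, apart from the identity, have size a multiple
of `h` dividing `h` times the order of the group is homocyclic, provided that `h` is coprime to the
order of the group. -/
theorem exists_mulEquiv_pi_zmod_of_orderCount {A : Type*} [CommGroup A] [Finite A] [Nontrivial A]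
    {h : ℕ} (hh : 1 < h) (hcop : (Nat.card A).Coprime h)
    (hmul : ∀ n, n ≠ 1 → h ∣ orderCount A n)
    (hdvd : ∀ n, n ≠ 1 → orderCount A n = 0 ∨ orderCount A n ∣ Nat.card A * h) :
    ∃ p k r : ℕ, p.Prime ∧ 0 < k ∧ 0 < r ∧
      Nonempty (A ≃* (Fin r → Multiplicative (ZMod (p ^ k)))) ∧ h = p ^ r - 1 := by
  have hne {q : ℕ} (hq : q.Prime) (hqA : q ∣ Nat.card A) : orderCount A q ≠ 0 := by
    have : Fact q.Prime := ⟨hq⟩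
    obtain ⟨a, ha⟩ := exists_prime_orderOf_dvd_card' q hqA
    exact orderCount_ne_zero_iff.mpr ⟨a, ha⟩
  obtain ⟨p, hp, hpA⟩ := Nat.exists_prime_and_dvd (Finite.one_lt_card (α := A)).ne'
  have huniq : ∀ {q : ℕ}, q.Prime → q ∣ Nat.card A → q = p := by
    intro q hq hqA
    by_contra hqp
    have hmult := orderCount_mul_of_coprime (A := A) hq.pos hp.pos
      ((Nat.coprime_primes hq hp).mpr hqp)
    have hqp1 : q * p ≠ 1 := fun h1 => hq.one_lt.ne' (Nat.eq_one_of_mul_eq_one_right h1)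
    have h2 := (hdvd (q * p) hqp1).resolve_left
      (hmult ▸ Nat.mul_ne_zero (hne hq hqA) (hne hp hpA))
    rw [hmult] at h2
    have h3 : h * h ∣ Nat.card A * h :=
      (mul_dvd_mul (hmul q hq.one_lt.ne') (hmul p hp.one_lt.ne')).trans h2
    have h4 : h ∣ Nat.card A := Nat.dvd_of_mul_dvd_mul_right (by omega) h3
    have h5 := Nat.Coprime.eq_one_of_dvd hcop.symm h4
    omega
  have hpcard := Nat.eq_prime_pow_of_unique_prime_dvd Nat.card_pos.ne' huniq
  set m := (Nat.card A).primeFactorsList.length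
  have hph : p.Coprime h := hcop.coprime_dvd_left hpA
  obtain ⟨k, -, hk⟩ := (Nat.dvd_prime_pow hp).mp (hpcard ▸ Group.exponent_dvd_nat_card (G := A))
  obtain ⟨a, ha⟩ := Monoid.exists_orderOf_eq_exponent (G := A) Monoid.ExponentExists.of_finite
  rw [hk] at ha
  have hk0 : 0 < k := by
    rw [Nat.pos_iff_ne_zero]
    rintro rfl
    exact Monoid.one_lt_exponent (G := A) |>.ne' (by rw [hk, pow_zero])
  have hstep {j c : ℕ} (hj : j < k)
      (hc : Nat.card (powMonoidHom (p ^ j) : A →* A).ker = p ^ c) :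
      ∃ b, p ^ b = h + 1 ∧ Nat.card (powMonoidHom (p ^ (j + 1)) : A →* A).ker = p ^ (c + b) := by
    have hj1 : p ^ (j + 1) ≠ 1 := (one_lt_pow₀ hp.one_lt j.succ_ne_zero).ne'
    obtain ⟨d, hd⟩ := hmul (p ^ (j + 1)) hj1
    have hnz : orderCount A (p ^ (j + 1)) ≠ 0 := by
      refine orderCount_ne_zero_iff.mpr ⟨a ^ p ^ (k - (j + 1)), ?_⟩
      have hpk : p ^ k = p ^ (j + 1) * p ^ (k - (j + 1)) := by
        rw [← pow_add, Nat.add_sub_cancel' hj]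
      rw [orderOf_pow_of_dvd (pow_ne_zero _ hp.ne_zero), ha, hpk,
        Nat.mul_div_cancel _ (pow_pos hp.pos _)]
      rw [ha, hpk]
      exact dvd_mul_left _ _
    have h2 := (hdvd _ hj1).resolve_left hnz
    rw [hd, mul_comm h] at h2
    obtain ⟨s, -, rfl⟩ := (Nat.dvd_prime_pow hp).mp
      (hpcard ▸ Nat.dvd_of_mul_dvd_mul_right (by omega) h2)
    obtain ⟨b, -, hb⟩ := (Nat.dvd_prime_pow hp).mp
      (hpcard ▸ (powMonoidHom (p ^ (j + 1)) : A →* A).ker.card_subgroup_dvd_card)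
    have hadd := card_ker_pow_add_orderCount (A := A) hp j
    rw [hc, hd, hb] at hadd
    obtain ⟨hcb, heq⟩ := hp.pow_sub_eq_of_pow_eq_pow_add (by omega) hph hadd.symm
    exact ⟨b - c, heq, by rw [hb, Nat.add_sub_cancel' hcb]⟩
  have hker0 : Nat.card (powMonoidHom (p ^ 0) : A →* A).ker = p ^ 0 := by
    rw [pow_zero, Subgroup.card_eq_one, eq_bot_iff]
    intro x hx
    simpa using hx
  obtain ⟨r, hr, hker⟩ := hstep hk0 hker0
  have hkerj : ∀ j ≤ k, Nat.card (powMonoidHom (p ^ j) : A →* A).ker = p ^ (r * j) := by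
    intro j
    induction j with
    | zero => exact fun _ => hker0
    | succ j ih =>
      intro hj
      obtain ⟨b, hb, hcard⟩ := hstep hj (ih (by omega))
      obtain rfl : b = r := Nat.pow_right_injective hp.two_le (hb.trans hr.symm)
      rw [hcard, Nat.mul_succ]
  refine ⟨p, k, r, hp, hk0, Nat.pos_iff_ne_zero.mpr ?_,
    nonempty_mulEquiv_pi_zmod_of_card hp hk (by simpa using hker) ?_, by omega⟩
  · rintro rfl
    rw [pow_zero] at hr
    omega
  · rw [← hkerj k le_rfl, ← Subgroup.card_top (G := A)]
    congr 2
    refine (eq_top_iff.mpr fun x _ => ?_).symm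
    change x ^ p ^ k = 1
    rw [← hk, Monoid.pow_exponent_eq_one]

theorem orderCount_dvd_of_mulEquiv_pi_zmod {A : Type*} [Group A] [Finite A] {p k r : ℕ}
    (hp : p.Prime) (e : A ≃* (Fin r → Multiplicative (ZMod (p ^ k)))) {n : ℕ} (hn : n ≠ 1) :
    orderCount A n = 0 ∨ orderCount A n ∣ Nat.card A * (p ^ r - 1) := by
  rw [or_iff_not_imp_left]
  intro h0
  have : NeZero (p ^ k) := ⟨pow_ne_zero _ hp.ne_zero⟩
  obtain ⟨a, rfl⟩ := orderCount_ne_zero_iff.mp h0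
  have hpow : e a ^ p ^ k = 1 := by
    funext i
    have := orderOf_dvd_natCard (e a i)
    rw [orderOf_dvd_iff_pow_eq_one] at this
    simpa using this
  rw [← map_pow, map_eq_one_iff e e.injective, ← orderOf_dvd_iff_pow_eq_one] at hpow
  obtain ⟨j, hj, hja⟩ := (Nat.dvd_prime_pow hp).mp hpow
  rw [hja] at hn ⊢
  obtain ⟨j, rfl⟩ : ∃ i, j = i + 1 := Nat.exists_eq_succ_of_ne_zero (by rintro rfl; simp at hn)
  have hker (i : ℕ) (hi : i ≤ k) :
      Nat.card (powMonoidHom (p ^ i) : (Fin r → Multiplicative (ZMod (p ^ k))) →* _).ker =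
        p ^ (i * r) := by
    rw [card_ker_pow_pi_zmod]
    simp [Nat.gcd_eq_right (pow_dvd_pow p hi), pow_mul]
  have hadd := card_ker_pow_add_orderCount (A := Fin r → Multiplicative (ZMod (p ^ k))) hp j
  rw [hker j (by omega), hker (j + 1) hj, ← orderCount_congr e] at hadd
  have hcount : orderCount A (p ^ (j + 1)) = p ^ (j * r) * (p ^ r - 1) := by
    rw [Nat.mul_sub, ← pow_add, mul_one, ← Nat.succ_mul]
    exact Nat.eq_sub_of_add_eq' hadd
  rw [hcount, Nat.card_congr e.toEquiv]
  refine Nat.mul_dvd_mul_right ?_ _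
  simp only [Nat.card_pi, Nat.card_congr Multiplicative.toAdd, Nat.card_zmod, Finset.prod_const,
    Finset.card_univ, Fintype.card_fin, ← pow_mul]
  exact pow_dvd_pow p (Nat.mul_le_mul_right r (by omega))

end HomocyclicRecognition

namespace IsFrobeniusWith

variable {G : Type*} [Group G] {K H : Subgroup G}

theorem card_complement_dvd (hF : IsFrobeniusWith K H) (P : G → Prop)
    (hconj : ∀ g x, P x → P (g * x * g⁻¹)) (hone : ¬ P 1) :
    Nat.card H ∣ Nat.card {k : K // P k} := by
  obtain ⟨-, -, hK, -, -, hfree⟩ := hF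
  let act : MulAction H {k : K // P k} :=
    { smul := fun h k => ⟨⟨h * k.1 * (h : G)⁻¹, hK.conj_mem _ k.1.2 _⟩, hconj _ _ k.2⟩
      one_smul := fun k => Subtype.ext (Subtype.ext (by
        change ((1 : H) : G) * k.1 * ((1 : H) : G)⁻¹ = k.1
        simp))
      mul_smul := fun g h k => Subtype.ext (Subtype.ext (by
        change ((g * h : H) : G) * k.1 * ((g * h : H) : G)⁻¹ = g * (h * k.1 * (h : G)⁻¹) * (g : G)⁻¹
        simp [mul_assoc])) }
  have hstab (k : {k : K // P k}) : MulAction.stabilizer H k = ⊥ := by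
    refine eq_bot_iff.mpr fun h hh => ?_
    by_contra h1
    refine hfree h h.2 (fun h' => h1 (Subtype.ext h')) k.1 k.1.2 (fun hk => hone ?_)
      (congrArg (fun x : {k : K // P k} => ((x : K) : G)) hh)
    exact hk ▸ k.2
  rw [Nat.card_congr (MulAction.selfEquivOrbitsQuotientProd hstab), Nat.card_prod]
  exact dvd_mul_left _ _

theorem card_eq (hF : IsFrobeniusWith K H) : Nat.card G = Nat.card K * Nat.card H := by
  obtain ⟨-, -, -, hinf, hmul, -⟩ := hF
  refine (Subgroup.IsComplement.card_mul_card (Subgroup.isComplement'_of_disjoint_and_mul_eq_univ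
    (disjoint_iff.mpr hinf) (Set.eq_univ_of_forall fun g => ?_))).symm
  obtain ⟨k, hk, h, hh, rfl⟩ := hmul g
  exact Set.mul_mem_mul hk hh

/-- Conjugation by a nontrivial element of the complement is a fixed-point-free automorphism of the
kernel. -/
theorem exists_fixedPointFree (hF : IsFrobeniusWith K H) {h : G} (hh : h ∈ H) (h1 : h ≠ 1) :
    ∃ φ : K ≃* K, (∀ k, (φ k : G) = h * k * h⁻¹) ∧ MonoidHom.FixedPointFree φ := by
  obtain ⟨-, -, hK, -, -, hfree⟩ := hF
  refine ⟨MulAut.conjNormal h, MulAut.conjNormal_apply h, fun k hk => ?_⟩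
  by_contra hk1
  refine hfree h hh h1 k k.2 (fun h' => hk1 (Subtype.ext h')) ?_
  rw [← MulAut.conjNormal_apply, hk]

variable [Finite G]

theorem coprime_card (hF : IsFrobeniusWith K H) : (Nat.card K).Coprime (Nat.card H) := by
  classical
  have hdvd := hF.card_complement_dvd (fun x => x ≠ 1) (fun g x hx => by simpa using hx) (by simp)
  have hcard : Nat.card {k : K // (k : G) ≠ 1} + 1 = Nat.card K := by
    have : Fintype K := Fintype.ofFinite K
    have h1 : Nat.card {k : K // ((k : G) = 1)} = 1 := by
      simp
    rw [← Nat.card_congr (Equiv.sumCompl fun k : K => (k : G) = 1), Nat.card_sum, h1, add_comm]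
  rw [← hcard]
  exact Nat.Coprime.coprime_dvd_right hdvd (by simp)

/-- An element outside the kernel is conjugate, under a unique element of the kernel, to a unique
element of the complement. -/
theorem orderCount_eq (hF : IsFrobeniusWith K H) {n : ℕ} (hn : n ≠ 1) :
    orderCount G n = orderCount K n + Nat.card K * orderCount H n := by
  have hne {x : H} (hx : orderOf x = n) : (x : G) ≠ 1 := by
    rintro h1
    exact hn (by rw [← hx, ← Subgroup.orderOf_coe, h1, orderOf_one])
  have hK : K.Normal := hF.2.2.1
  have hdisj {x : G} (hxK : x ∈ K) (hxH : x ∈ H) : x = 1 :=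
    Subgroup.mem_bot.mp (hF.2.2.2.1 ▸ Subgroup.mem_inf.mpr ⟨hxK, hxH⟩)
  rw [orderCount, orderCount, orderCount, ← Nat.card_prod, ← Nat.card_sum]
  refine (Nat.card_congr (Equiv.ofBijective (Sum.elim
    (fun k : {k : K // orderOf k = n} =>
      (⟨k.1, by rw [Subgroup.orderOf_coe]; exact k.2⟩ : {g : G // orderOf g = n}))
    (fun x : K × {h : H // orderOf h = n} =>
      ⟨x.1 * x.2.1 * (x.1 : G)⁻¹, by
        rw [← MulAut.conj_apply, MulEquiv.orderOf_eq, Subgroup.orderOf_coe]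
        exact x.2.2⟩)) ⟨?_, ?_⟩)).symm
  · refine Function.Injective.sumElim ?_ ?_ ?_
    · intro a b hab
      exact Subtype.ext (Subtype.ext (congrArg (fun x : {g : G // orderOf g = n} => (x : G)) hab))
    · rintro ⟨k, h⟩ ⟨k', h'⟩ hab
      have hab : (k : G) * h.1 * (k : G)⁻¹ = k' * h'.1 * (k' : G)⁻¹ := congrArg Subtype.val hab
      have hconj : ((k'⁻¹ * k : K) : G) * h.1 * ((k'⁻¹ * k : K) : G)⁻¹ = h'.1 := by
        push_cast
        rw [mul_inv_rev, inv_inv]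
        calc _ = (k' : G)⁻¹ * (k * h.1 * (k : G)⁻¹) * k' := by group
          _ = _ := by rw [hab]; group
      have hhh : (h'.1 : G) = h.1 := by
        rw [← mul_inv_eq_one]
        refine hdisj ?_ (H.mul_mem h'.1.2 (H.inv_mem h.1.2))
        rw [← hconj]
        have := K.mul_mem (k'⁻¹ * k : K).2 (hK.conj_mem _ (K.inv_mem (k'⁻¹ * k : K).2) h.1)
        simpa only [mul_assoc] using this
      rw [hhh] at hconj
      have hkk : ((k'⁻¹ * k : K) : G) = 1 := by
        by_contra h1
        refine hF.2.2.2.2.2 h.1 h.1.2 (hne h.2) _ (k'⁻¹ * k : K).2 h1 ?_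
        rw [mul_inv_eq_iff_eq_mul] at hconj ⊢
        exact hconj.symm
      have hkk' : k = k' := (inv_mul_eq_one.mp (Subtype.ext hkk)).symm
      exact Prod.ext hkk' (Subtype.ext (Subtype.ext hhh.symm))
    · rintro a ⟨k, h⟩ hab
      have hab : ((a.1 : K) : G) = k * h.1 * (k : G)⁻¹ := congrArg Subtype.val hab
      refine hne h.2 (hdisj ?_ h.1.2)
      have hm := hK.conj_mem _ a.1.2 (k : G)⁻¹
      rw [hab] at hm
      simpa [mul_assoc] using hm
  · rintro ⟨g, hg⟩
    obtain ⟨k, hk, h, hh, rfl⟩ := hF.2.2.2.2.1 g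
    by_cases h1 : h = 1
    · subst h1
      refine ⟨Sum.inl ⟨⟨k, hk⟩, ?_⟩, Subtype.ext (mul_one k).symm⟩
      rw [← Subgroup.orderOf_coe, ← hg, mul_one]
    · obtain ⟨φ, hφ, hfix⟩ := hF.exists_fixedPointFree hh h1
      obtain ⟨x, hx⟩ := hfix.commutatorMap_surjective ⟨k, hk⟩
      have hx' : (x : G) * h * (x : G)⁻¹ = k * h := by
        have hk' : (x : G) / (h * x * h⁻¹) = k := by
          rw [← hφ]
          exact congrArg (Subtype.val : K → G) hx
        rw [← hk', div_eq_mul_inv]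
        group
      refine ⟨Sum.inr ⟨x, ⟨⟨h, hh⟩, ?_⟩⟩, Subtype.ext hx'⟩
      rw [← Subgroup.orderOf_coe, ← hg, ← hx', ← MulAut.conj_apply, MulEquiv.orderOf_eq]

theorem perfectOrderClasses_iff (hF : IsFrobeniusWith K H) :
    PerfectOrderClasses G ↔ PerfectOrderClasses H ∧
      ∀ n, n ≠ 1 → orderCount K n = 0 ∨ orderCount K n ∣ Nat.card K * Nat.card H := by
  have hzero {n : ℕ} (hn : n ≠ 1) : orderCount K n = 0 ∨ orderCount H n = 0 := by
    by_contra! hKH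
    obtain ⟨x, hx⟩ := orderCount_ne_zero_iff.mp hKH.1
    obtain ⟨y, hy⟩ := orderCount_ne_zero_iff.mp hKH.2
    exact hn (Nat.eq_one_of_dvd_coprimes hF.coprime_card
      (hx ▸ orderOf_dvd_natCard x) (hy ▸ orderOf_dvd_natCard y))
  have hposK : 0 < Nat.card K := Nat.card_pos
  have hno (A : Type _) [Group A] [Finite A] : orderCount A 0 = 0 := by
    by_contra h0
    obtain ⟨x, hx⟩ := orderCount_ne_zero_iff.mp h0
    exact (orderOf_pos x).ne' hx
  have key {n : ℕ} (hn : n ≠ 1) : (orderCount G n = 0 ∨ orderCount G n ∣ Nat.card G) ↔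
      (orderCount H n = 0 ∨ orderCount H n ∣ Nat.card H) ∧
        (orderCount K n = 0 ∨ orderCount K n ∣ Nat.card K * Nat.card H) := by
    rw [hF.orderCount_eq hn, hF.card_eq]
    rcases hzero hn with h0 | h0
    · simp [h0, Nat.mul_dvd_mul_iff_left hposK, hposK.ne']
    · simp [h0]
  constructor
  · refine fun hG => ⟨fun n hn => ?_, fun n hn => ?_⟩
    · by_cases h1 : n = 1
      · exact Or.inr (by rw [h1, orderCount_one]; exact one_dvd _)
      · exact ((key h1).mp (hG n hn)).1
    · rcases Nat.eq_zero_or_pos n with rfl | h0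
      · exact Or.inl (hno K)
      · exact ((key hn).mp (hG n h0)).2
  · rintro ⟨hH, hK⟩ n hn
    by_cases h1 : n = 1
    · exact Or.inr (by rw [h1, orderCount_one]; exact one_dvd _)
    · exact (key h1).mpr ⟨hH n hn, hK n h1⟩

theorem commute_kernel_of_even_card (hF : IsFrobeniusWith K H) (heven : Even (Nat.card H))
    (a b : K) : a * b = b * a := by
  obtain ⟨t, ht⟩ := exists_prime_orderOf_dvd_card' 2 (even_iff_two_dvd.mp heven)
  have ht1 : (t : G) ≠ 1 := by
    intro h1
    rw [← Subgroup.orderOf_coe, h1, orderOf_one] at ht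
    omega
  have ht2 : (t : G) * t = 1 := by
    rw [← sq, ← ht, ← Subgroup.orderOf_coe, pow_orderOf_eq_one]
  obtain ⟨φ, hφ, hfix⟩ := hF.exists_fixedPointFree t.2 ht1
  refine hfix.commute_all_of_involutive (fun k => Subtype.ext ?_) a b
  rw [hφ, hφ]
  calc (t : G) * (t * k * (t : G)⁻¹) * (t : G)⁻¹ = (t * t) * k * ((t : G) * t)⁻¹ := by group
    _ = k := by rw [ht2]; simp

end IsFrobeniusWith

/-- Theorem A: a finite Frobenius group has perfect order classes iff its complement does,
its kernel is a homocyclic `p`-group for an odd prime `p`, and `|H| = p^r - 1` where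
`r` is the rank of the kernel. -/
theorem frobenius_perfectOrderClasses_iff
    {G : Type*} [Group G] [Fintype G] (K H : Subgroup G)
    (hFrob : IsFrobeniusWith K H) :
    PerfectOrderClasses G ↔
      PerfectOrderClasses H ∧
        ∃ p k r : ℕ, p.Prime ∧ Odd p ∧ 0 < k ∧ 0 < r ∧
          Nonempty (K ≃* (Fin r → Multiplicative (ZMod (p ^ k)))) ∧
          Nat.card H = p ^ r - 1 := by
  have : Nontrivial K := (Subgroup.nontrivial_iff_ne_bot K).mpr hFrob.1
  have : Nontrivial H := by
    refine (Subgroup.nontrivial_iff_ne_bot H).mpr fun hbot => hFrob.2.1 ?_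
    refine eq_top_iff.mpr fun g _ => ?_
    obtain ⟨k, hk, h, hh, rfl⟩ := hFrob.2.2.2.2.1 g
    rw [hbot, Subgroup.mem_bot] at hh
    rwa [hh, mul_one]
  rw [hFrob.perfectOrderClasses_iff]
  refine and_congr_right fun hH => ⟨fun hK => ?_, ?_⟩
  · have heven := hH.even_card
    have hmul (n : ℕ) (hn : n ≠ 1) : Nat.card H ∣ orderCount K n := by
      have := hFrob.card_complement_dvd (fun x => orderOf x = n)
        (fun g x hx => by rw [← hx, ← MulAut.conj_apply, MulEquiv.orderOf_eq])
        (by rw [orderOf_one]; exact hn.symm)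
      simpa only [orderCount, Subgroup.orderOf_coe] using this
    let : CommGroup K := .mk (hFrob.commute_kernel_of_even_card heven)
    obtain ⟨p, k, r, hp, hk, hr, he, hcard⟩ := exists_mulEquiv_pi_zmod_of_orderCount (A := K)
      Finite.one_lt_card hFrob.coprime_card hmul hK
    refine ⟨p, k, r, hp, hp.odd_of_ne_two ?_, hk, hr, he, hcard⟩
    rintro rfl
    rw [hcard, Nat.even_sub Nat.one_le_two_pow] at heven
    exact Nat.not_even_one (heven.mp (even_two.pow_of_ne_zero hr.ne'))
  · rintro ⟨p, k, r, hp, -, -, -, ⟨e⟩, hcard⟩ n hn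
    rw [hcard]
    exact orderCount_dvd_of_mulEquiv_pi_zmod hp e hn
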